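/- There exist constants C > 0 and δ > 0 such that for all x, y ∈ ℝ³ with 0 < |x − y| < δ, |(4π)^{3/2} b^{−1/2} I₀(x,y) − ∫₁^∞ e^{−b|x−y|² v/4} v^{−1/2} dv| ≤ C. -/

import Mathlib

/-!
The substitution `v = 1 / u` turns `∫₁^∞ exp(-b d² v / 4) v^{-1/2} dv`, where `d = |x - y|`, into
`∫₀¹ exp(-b d² / (4u)) u^{-3/2} du`, an integral over the same interval as `I₀`. Since
`coth u = 1/u + O(u)` and `1 / sinh u = 1/u + O(u)` near `0`, and since `d²` is the sum of the
longitudinal and transverse squares, the two integrands differ by at most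
`(b/4 · |x_⊥ - y_⊥|² + 1) u^{-1/2}` (`abs_kernel_sub_le`). This is integrable on `(0, 1)`, with a
bound uniform in `x, y` as soon as `|x - y| < 1`. Each of the two integrands is integrable by
itself because `d > 0`: the exponential then beats one power of `1/u`
(`integrableOn_freeKernel`), and the magnetic kernel is dominated by the free one.
-/

open MeasureTheory Set

/-- `|x_⊥ - y_⊥|²` for `x, y ∈ ℝ³`. -/
noncomputable def perpSq (x y : EuclideanSpace ℝ (Fin 3)) : ℝ :=
  (x 0 - y 0) ^ 2 + (x 1 - y 1) ^ 2

/-- The integrand `exp(-(b/4)[(x₃-y₃)²/u + coth(u)|x_⊥-y_⊥|²]) / (u^{1/2} sinh u)`. -/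
noncomputable def kerInt (b : ℝ) (x y : EuclideanSpace ℝ (Fin 3)) (u : ℝ) : ℝ :=
  Real.exp (-(b / 4) * ((x 2 - y 2) ^ 2 / u + Real.cosh u / Real.sinh u * perpSq x y)) /
    (Real.sqrt u * Real.sinh u)

/-- `I₀(x,y) = (b^{1/2}/(4π)^{3/2}) ∫₀¹ kerInt b x y u du`. -/
noncomputable def I0 (b : ℝ) (x y : EuclideanSpace ℝ (Fin 3)) : ℝ :=
  Real.sqrt b / (4 * Real.pi) ^ ((3 : ℝ) / 2) * ∫ u in Ioo (0 : ℝ) 1, kerInt b x y u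

/-- `I_∞(x,y) = (b^{1/2}/(4π)^{3/2}) ∫₁^∞ kerInt b x y u du`. -/
noncomputable def IInf (b : ℝ) (x y : EuclideanSpace ℝ (Fin 3)) : ℝ :=
  Real.sqrt b / (4 * Real.pi) ^ ((3 : ℝ) / 2) * ∫ u in Ici (1 : ℝ), kerInt b x y u

/-- The integrand of `∫₁^∞ exp(-b d² v / 4) v^{-1/2} dv` after the substitution `v = 1 / u`, with
`D = d²`. -/
noncomputable def freeKernel (b D u : ℝ) : ℝ :=
  Real.exp (-(b / 4) * (D / u)) / (Real.sqrt u * u)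

lemma sinh_le_mul_cosh {u : ℝ} (hu : 0 < u) : Real.sinh u ≤ u * Real.cosh u := by
  obtain ⟨c, hc, h⟩ := exists_hasDerivAt_eq_slope Real.sinh Real.cosh hu
    Real.continuous_sinh.continuousOn (fun x _ => Real.hasDerivAt_sinh x)
  have h1 : Real.cosh c ≤ Real.cosh u := by
    rw [Real.cosh_le_cosh, abs_of_pos hc.1, abs_of_pos hu]; exact hc.2.le
  rw [h, Real.sinh_zero, sub_zero, sub_zero, div_le_iff₀ hu] at h1
  linarith

lemma cosh_le_one_add_sq {u : ℝ} (hu : 0 < u) (hu1 : u < 1) : Real.cosh u ≤ 1 + u ^ 2 := by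
  have h1 : u ^ 2 < 1 := by nlinarith
  have h2 := Real.exp_bound_div_one_sub_of_interval (x := u ^ 2 / 2) (by positivity) (by linarith)
  have h3 : 1 / (1 - u ^ 2 / 2) ≤ 1 + u ^ 2 := by
    rw [div_le_iff₀ (by linarith)]
    nlinarith [mul_nonneg (sq_nonneg u) (sub_nonneg.2 h1.le)]
  exact (Real.cosh_le_exp_half_sq u).trans (h2.trans h3)

lemma inv_le_coth {u : ℝ} (hu : 0 < u) : 1 / u ≤ Real.cosh u / Real.sinh u := by
  rw [div_le_div_iff₀ hu (Real.sinh_pos_iff.2 hu)]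
  linarith [sinh_le_mul_cosh hu]

lemma coth_sub_inv_le {u : ℝ} (hu : 0 < u) (hu1 : u < 1) :
    Real.cosh u / Real.sinh u ≤ 1 / u + u := by
  have hs := Real.sinh_pos_iff.2 hu
  have h1 := Real.self_le_sinh_iff.2 hu.le
  have h2 := cosh_le_one_add_sq hu hu1
  have h3 : (1 / u + u) = (1 + u ^ 2) / u := by field_simp
  rw [h3, div_le_div_iff₀ hs hu]
  nlinarith [mul_le_mul_of_nonneg_right h2 hu.le,
    mul_le_mul_of_nonneg_left h1 (by positivity : 0 ≤ 1 + u ^ 2)]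

lemma inv_sub_inv_sinh_le {u : ℝ} (hu : 0 < u) (hu1 : u < 1) :
    1 / u - 1 / Real.sinh u ≤ u := by
  have hs := Real.sinh_pos_iff.2 hu
  have h1 := Real.self_le_sinh_iff.2 hu.le
  have h2 := cosh_le_one_add_sq hu hu1
  have h3 := sinh_le_mul_cosh hu
  rw [div_sub_div _ _ hu.ne' hs.ne', div_le_iff₀ (by positivity)]
  nlinarith [mul_le_mul_of_nonneg_left h2 hu.le,
    mul_le_mul_of_nonneg_left h1 (sq_nonneg u)]

lemma kerInt_nonneg (b : ℝ) (x y : EuclideanSpace ℝ (Fin 3)) {u : ℝ} (hu : 0 < u) :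
    0 ≤ kerInt b x y u := by
  have hs := Real.sinh_pos_iff.2 hu
  unfold kerInt
  positivity

lemma dist_sq_eq (x y : EuclideanSpace ℝ (Fin 3)) :
    dist x y ^ 2 = (x 2 - y 2) ^ 2 + perpSq x y := by
  rw [EuclideanSpace.dist_sq_eq, Fin.sum_univ_three]
  simp only [Real.dist_eq, sq_abs, perpSq]
  ring

lemma perpSq_nonneg (x y : EuclideanSpace ℝ (Fin 3)) : 0 ≤ perpSq x y := by
  unfold perpSq; positivity

lemma exp_kernel_le {b : ℝ} (hb : 0 < b) (x y : EuclideanSpace ℝ (Fin 3)) {u : ℝ} (hu : 0 < u) :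
    Real.exp (-(b / 4) * ((x 2 - y 2) ^ 2 / u + Real.cosh u / Real.sinh u * perpSq x y)) ≤
      Real.exp (-(b / 4) * (dist x y ^ 2 / u)) := by
  rw [Real.exp_le_exp, dist_sq_eq]
  have h := mul_le_mul_of_nonneg_right (inv_le_coth hu) (perpSq_nonneg x y)
  have h2 : ((x 2 - y 2) ^ 2 + perpSq x y) / u = (x 2 - y 2) ^ 2 / u + 1 / u * perpSq x y := by
    ring
  rw [h2]
  nlinarith

lemma kerInt_le_freeKernel {b : ℝ} (hb : 0 < b) (x y : EuclideanSpace ℝ (Fin 3)) {u : ℝ}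
    (hu : 0 < u) : kerInt b x y u ≤ freeKernel b (dist x y ^ 2) u := by
  unfold kerInt freeKernel
  have h1 := Real.self_le_sinh_iff.2 hu.le
  have h2 := exp_kernel_le hb x y hu
  gcongr

/-- The bound `coth u - 1/u ≤ u` controls the difference of the exponentials, through
`1 - exp (-t) ≤ t`. -/
lemma exp_sub_exp_kernel_le {b : ℝ} (hb : 0 < b) (x y : EuclideanSpace ℝ (Fin 3)) {u : ℝ}
    (hu : 0 < u) (hu1 : u < 1) :
    Real.exp (-(b / 4) * (dist x y ^ 2 / u)) -
      Real.exp (-(b / 4) * ((x 2 - y 2) ^ 2 / u + Real.cosh u / Real.sinh u * perpSq x y)) ≤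
      b / 4 * perpSq x y * u := by
  have hP := perpSq_nonneg x y
  set B := -(b / 4) * (dist x y ^ 2 / u) with hB
  set A := -(b / 4) * ((x 2 - y 2) ^ 2 / u + Real.cosh u / Real.sinh u * perpSq x y) with hA
  have hBA : B - A ≤ b / 4 * perpSq x y * u := by
    have h := mul_le_mul_of_nonneg_right (coth_sub_inv_le hu hu1) hP
    have h2 : B = -(b / 4) * ((x 2 - y 2) ^ 2 / u + 1 / u * perpSq x y) := by
      rw [hB, dist_sq_eq]; ring
    rw [h2, hA]
    nlinarith
  have hB1 : Real.exp B ≤ 1 := by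
    rw [Real.exp_le_one_iff, hB]
    have : 0 ≤ b / 4 * (dist x y ^ 2 / u) := by positivity
    linarith
  have h0 : Real.exp A = Real.exp B * Real.exp (A - B) := by rw [← Real.exp_add]; ring_nf
  have h1 := Real.add_one_le_exp (A - B)
  have h2 : 0 ≤ b / 4 * perpSq x y * u := by positivity
  have h3 := Real.exp_pos B
  rw [h0]
  calc Real.exp B - Real.exp B * Real.exp (A - B) ≤ Real.exp B * (B - A) := by nlinarith
    _ ≤ Real.exp B * (b / 4 * perpSq x y * u) := by gcongr
    _ ≤ b / 4 * perpSq x y * u := mul_le_of_le_one_left h2 hB1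

/-- The pointwise comparison of the two integrands; the right-hand side is integrable at `0`. -/
lemma abs_kernel_sub_le {b : ℝ} (hb : 0 < b) (x y : EuclideanSpace ℝ (Fin 3)) {u : ℝ}
    (hu : 0 < u) (hu1 : u < 1) :
    |kerInt b x y u - freeKernel b (dist x y ^ 2) u| ≤
      (b / 4 * perpSq x y + 1) * u ^ (-(1 / 2) : ℝ) := by
  have hP := perpSq_nonneg x y
  have hs := Real.sinh_pos_iff.2 hu
  have hr := Real.sqrt_pos.2 hu
  rw [abs_sub_comm, abs_of_nonneg (sub_nonneg.2 (kerInt_le_freeKernel hb x y hu)),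
    Real.rpow_neg hu.le, ← Real.sqrt_eq_rpow]
  have hd := exp_sub_exp_kernel_le hb x y hu hu1
  have hi := inv_sub_inv_sinh_le hu hu1
  have hi' : 1 / Real.sinh u ≤ 1 / u :=
    one_div_le_one_div_of_le hu (Real.self_le_sinh_iff.2 hu.le)
  have hB1 : Real.exp (-(b / 4) * (dist x y ^ 2 / u)) ≤ 1 := by
    rw [Real.exp_le_one_iff]
    have : 0 ≤ b / 4 * (dist x y ^ 2 / u) := by positivity
    linarith
  unfold kerInt freeKernel
  set A := Real.exp (-(b / 4) *
    ((x 2 - y 2) ^ 2 / u + Real.cosh u / Real.sinh u * perpSq x y))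
  set B := Real.exp (-(b / 4) * (dist x y ^ 2 / u))
  have hB0 : 0 ≤ B := (Real.exp_pos _).le
  have e : B / (√u * u) - A / (√u * Real.sinh u) =
      ((B - A) * (1 / Real.sinh u) + B * (1 / u - 1 / Real.sinh u)) * (√u)⁻¹ := by
    field_simp
    ring
  rw [e]
  refine mul_le_mul_of_nonneg_right ?_ (inv_nonneg.2 hr.le)
  have t1 : (B - A) * (1 / Real.sinh u) ≤ b / 4 * perpSq x y := by
    calc (B - A) * (1 / Real.sinh u) ≤ (b / 4 * perpSq x y * u) * (1 / u) := by
          apply mul_le_mul hd hi' (by positivity) (by positivity)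
      _ = b / 4 * perpSq x y := by field_simp
  have t2 : B * (1 / u - 1 / Real.sinh u) ≤ 1 := by
    have : B * (1 / u - 1 / Real.sinh u) ≤ 1 * u :=
      mul_le_mul hB1 hi (sub_nonneg.2 hi') zero_le_one
    linarith
  linarith

lemma integrableOn_rpow_neg_half :
    IntegrableOn (fun u : ℝ => u ^ (-(1 / 2) : ℝ)) (Ioo 0 1) := by
  rw [intervalIntegral.integrableOn_Ioo_rpow_iff one_pos]
  norm_num

lemma integrableOn_freeKernel {b D : ℝ} (hb : 0 < b) (hD : 0 < D) :
    IntegrableOn (freeKernel b D) (Ioo 0 1) := by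
  refine Integrable.mono' (integrableOn_rpow_neg_half.const_mul (4 / (b * D))) ?_ ?_
  · refine Measurable.aestronglyMeasurable ?_
    unfold freeKernel
    fun_prop
  · filter_upwards [ae_restrict_mem measurableSet_Ioo] with u hu
    have hu0 := hu.1
    have hr := Real.sqrt_pos.2 hu0
    rw [Real.rpow_neg hu0.le, ← Real.sqrt_eq_rpow]
    unfold freeKernel
    rw [Real.norm_of_nonneg (by positivity)]
    -- `exp (-t) ≤ 1 / t` absorbs the factor `1 / u`.
    have h1 : Real.exp (-(b / 4) * (D / u)) ≤ 4 / (b * D) * u := by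
      have ht : 0 < b / 4 * (D / u) := by positivity
      have h2 : b / 4 * (D / u) ≤ Real.exp (b / 4 * (D / u)) := by
        linarith [Real.add_one_le_exp (b / 4 * (D / u))]
      rw [neg_mul, Real.exp_neg]
      calc _ ≤ (b / 4 * (D / u))⁻¹ := inv_anti₀ ht h2
        _ = _ := by field_simp
    rw [div_le_iff₀ (by positivity)]
    calc _ ≤ 4 / (b * D) * u := h1
      _ = _ := by field_simp

lemma integrableOn_kerInt {b : ℝ} (hb : 0 < b) {x y : EuclideanSpace ℝ (Fin 3)}
    (hxy : 0 < dist x y) : IntegrableOn (kerInt b x y) (Ioo 0 1) := by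
  refine Integrable.mono' (integrableOn_freeKernel hb (pow_pos hxy 2)) ?_ ?_
  · refine Measurable.aestronglyMeasurable ?_
    unfold kerInt
    fun_prop
  · filter_upwards [ae_restrict_mem measurableSet_Ioo] with u hu
    rw [Real.norm_of_nonneg (kerInt_nonneg b x y hu.1)]
    exact kerInt_le_freeKernel hb x y hu.1

lemma integral_Ici_eq_integral_freeKernel (b D : ℝ) :
    ∫ v in Ici (1 : ℝ), Real.exp (-(b * D * v / 4)) / Real.sqrt v =
      ∫ u in Ioo (0 : ℝ) 1, freeKernel b D u := by
  have himg : Set.image (fun u : ℝ => u⁻¹) (Ioo 0 1) = Ioi 1 := by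
    have := inv_Ioo_0_left (one_pos : (0 : ℝ) < 1)
    rwa [inv_one, ← Set.image_inv_eq_inv] at this
  rw [integral_Ici_eq_integral_Ioi, ← himg,
    integral_image_eq_integral_abs_deriv_smul measurableSet_Ioo
      (fun u hu => (hasDerivAt_inv hu.1.ne').hasDerivWithinAt) inv_injective.injOn]
  refine setIntegral_congr_fun measurableSet_Ioo fun u hu => ?_
  have hu0 := hu.1
  have hr := Real.sqrt_pos.2 hu0
  have he : -(b * D * u⁻¹ / 4) = -(b / 4) * (D / u) := by ring
  simp only [freeKernel, smul_eq_mul, abs_neg, Real.sqrt_inv, he]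
  rw [abs_of_pos (by positivity)]
  field_simp
  rw [Real.sq_sqrt hu0.le]

/-- There are `C > 0` and `δ > 0` such that for all `x, y ∈ ℝ³` with
`0 < |x - y| < δ`:
`|(4π)^{3/2} b^{-1/2} I₀(x,y) - ∫₁^∞ e^{-b|x-y|²v/4} v^{-1/2} dv| ≤ C`. -/
theorem stmt6 (b : ℝ) (hb : 0 < b) :
    ∃ C > (0 : ℝ), ∃ δ > (0 : ℝ), ∀ x y : EuclideanSpace ℝ (Fin 3),
      0 < dist x y → dist x y < δ →
      |(4 * Real.pi) ^ ((3 : ℝ) / 2) / Real.sqrt b * I0 b x y -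
          ∫ v in Ici (1 : ℝ), Real.exp (-(b * dist x y ^ 2 * v / 4)) / Real.sqrt v| ≤ C := by
  have hJ0 : 0 ≤ ∫ u in Ioo (0 : ℝ) 1, u ^ (-(1 / 2) : ℝ) :=
    setIntegral_nonneg measurableSet_Ioo fun u hu => Real.rpow_nonneg hu.1.le _
  refine ⟨(b / 4 + 1) * (∫ u in Ioo (0 : ℝ) 1, u ^ (-(1 / 2) : ℝ)) + 1, by positivity, 1,
    one_pos, fun x y hxy hd => ?_⟩
  have hI : (4 * Real.pi) ^ ((3 : ℝ) / 2) / Real.sqrt b * I0 b x y =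
      ∫ u in Ioo (0 : ℝ) 1, kerInt b x y u := by
    have h1 : (0 : ℝ) < (4 * Real.pi) ^ ((3 : ℝ) / 2) := by positivity
    have h2 := Real.sqrt_pos.2 hb
    unfold I0
    field_simp
  have hP : perpSq x y ≤ 1 := by
    have h1 := dist_sq_eq x y
    nlinarith [sq_nonneg (x 2 - y 2)]
  rw [hI, integral_Ici_eq_integral_freeKernel, ← integral_sub (integrableOn_kerInt hb hxy)
    (integrableOn_freeKernel hb (pow_pos hxy 2)), ← Real.norm_eq_abs]
  refine (norm_integral_le_of_norm_le (integrableOn_rpow_neg_half.const_mul (b / 4 + 1)) ?_).trans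
    ?_
  · filter_upwards [ae_restrict_mem measurableSet_Ioo] with u hu
    refine (abs_kernel_sub_le hb x y hu.1 hu.2).trans ?_
    refine mul_le_mul_of_nonneg_right ?_ (Real.rpow_nonneg hu.1.le _)
    nlinarith
  · rw [integral_const_mul]
    linarith
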